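/- Let K satisfy Assumption A, let T'' > 0, and let f be a mass-conserving weak solution of the coagulation equation on [0,T''] with kernel K and initial datum f_in, with 0 < v₀ := ∫ v f_in(dv) < ∞. Fix T ∈ (0,T''). Then there exist R₀ > 0 (depending on T and f) and a constant C > 0 (independent of m and R) such that for every t ∈ [0,T], every real m > 2 and every R ≥ R₀ with M := ∫_{[R,∞)} (v − R)^m f(dv,t) > 0, one has T ≤ t + C·M^{−(γ−1)/(m−1)}. -/

import Mathlib

open MeasureTheory Set Filter

noncomputable section

/-- Assumption A on the coagulation kernel `K(v,v') = h(v,v') g(v/(v+v'))`. -/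
structure KernelAssumptionA (K : ℝ → ℝ → ℝ) (h : ℝ → ℝ → ℝ) (g : ℝ → ℝ)
    (γ H H₀ H₁ G₀ G₁ k : ℝ) : Prop where
  K_nonneg : ∀ v v', 0 ≤ v → 0 ≤ v' → 0 ≤ K v v'
  K_eq : ∀ v v', 0 ≤ v → 0 ≤ v' → 0 < v + v' →
      K v v' = h v v' * g (v / (v + v'))
  h_cont : ContinuousOn (fun p : ℝ × ℝ => h p.1 p.2) (Ici 0 ×ˢ Ici 0)
  h_symm : ∀ v v', h v v' = h v' v
  γ_gt_one : 1 < γ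
  H_gt_one : 1 < H
  H₀_pos : 0 < H₀
  h_lower : ∀ v v', 0 ≤ v → 0 ≤ v' → H < v + v' →
      H₀ * (v ^ γ + v' ^ γ) ≤ h v v'
  h_posOn : ∀ R : ℝ, 0 < R → ∃ C : ℝ, 0 < C ∧
      ∀ v ∈ Icc (1 / R) R, ∀ v' ∈ Icc (1 / R) R, C ≤ h v v'
  H₁_pos : 0 < H₁
  h_upper : ∀ v v', 0 ≤ v → 0 ≤ v' → h v v' ≤ H₁ * (v ^ γ + v' ^ γ)
  g_cont : ContinuousOn g (Icc 0 1)
  g_symm : ∀ x ∈ Icc (0 : ℝ) 1, g x = g (1 - x)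
  g_half : g (1 / 2) = 0
  G₀_pos : 0 < G₀
  G₁_pos : 0 < G₁
  k_ge_one : 1 ≤ k
  g_lower : ∀ x ∈ Icc (0 : ℝ) 1, G₀ * |x - 1 / 2| ^ k ≤ g x
  g_upper : ∀ x ∈ Icc (0 : ℝ) 1, g x ≤ G₁

/-- Weak solution of the coagulation equation on `[0, T]` with kernel `K`
and initial datum `fin`, in the sense of measures on `(0,∞)`. -/
structure IsWeakSolution (K : ℝ → ℝ → ℝ) (γ T : ℝ)
    (f : ℝ → Measure ℝ) (fin : Measure ℝ) : Prop where
  conc : ∀ t ∈ Icc (0 : ℝ) T, f t (Iic 0) = 0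
  time_cont : ∀ φ : ℝ → ℝ, Continuous φ → (∃ M : ℝ, ∀ v, |φ v| ≤ M) →
      ContinuousOn (fun t => ∫ v, φ v ∂(f t)) (Icc (0 : ℝ) T)
  moment_bound : ∃ C : ℝ, ∀ t ∈ Icc (0 : ℝ) T,
      Integrable (fun v => 1 + v ^ γ) (f t) ∧ (∫ v, (1 + v ^ γ) ∂(f t)) ≤ C
  weak_form : ∀ φ : ℝ → ℝ, Continuous φ → HasCompactSupport φ →
      tsupport φ ⊆ Ioi 0 → ∀ t ∈ Icc (0 : ℝ) T,
      (∫ v, φ v ∂(f t)) - (∫ v, φ v ∂fin) =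
        (1 / 2) * ∫ s in (0 : ℝ)..t,
          (∫ v, (∫ v', K v v' * (φ (v + v') - φ v - φ v') ∂(f s)) ∂(f s))

/-- The solution conserves mass on `[0, T]`. -/
def IsMassConserving (T : ℝ) (f : ℝ → Measure ℝ) (fin : Measure ℝ) : Prop :=
  Integrable (fun v => v) fin ∧
    ∀ t ∈ Icc (0 : ℝ) T,
      Integrable (fun v => v) (f t) ∧ (∫ v, v ∂(f t)) = ∫ v, v ∂fin

/-- `μ` is a single Dirac measure `M • δ_V` with `M, V ∈ (0,∞)`. -/
def IsSingleDirac (μ : Measure ℝ) : Prop :=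
  ∃ M V : ℝ, 0 < M ∧ 0 < V ∧ μ = ENNReal.ofReal M • Measure.dirac V

/-!
The functional `F_N(t) = ∫ w · min(w, N)^(m-1) f(dv, t)`, `w = (v - R)⁺`, is a truncation of the
tail moment `M`. A cluster of size `v ≥ R` meets the clusters of size at most `L`, which carry half
of the mass, at a rate of order `v^γ`, because such pairs are far from the diagonal where the kernel
degenerates. With `α = (γ - 1) / (m - 1)` this gives
`F_N' ≥ c · F_N · min(m · (F_N / 2v₀)^α, (N / 2)^(γ - 1))`.
While the first term is the smaller one, `F_N^(-α)` decreases at a fixed rate, which can last only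
for a time of order `F_N(t)^(-α)`. Afterwards `F_N` exceeds a multiple of `N^(m-1)` and grows at
rate at least `(N / 2)^(γ - 1)`; during the time `T'' - T` left after `T` it would overtake the
bound `F_N ≤ N^(m-1) v₀` that mass conservation imposes, once `N` is large. Letting `N → ∞` turns
`F_N(t)` into `M`.
-/

/-! ### Measures on the positive half-line -/

section PositiveSizes

variable {μ : Measure ℝ} {γ : ℝ}

lemma ae_pos_of_measure_Iic_eq_zero (h₀ : μ (Iic 0) = 0) : ∀ᵐ v ∂μ, 0 < v := by
  simpa only [ae_iff, not_lt, Iic] using h₀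

lemma ae_prod_pos_of_measure_Iic_eq_zero (h₀ : μ (Iic 0) = 0) :
    ∀ᵐ p ∂μ.prod μ, 0 < p.1 ∧ 0 < p.2 :=
  (Measure.quasiMeasurePreserving_fst.ae (ae_pos_of_measure_Iic_eq_zero h₀)).and
    (Measure.quasiMeasurePreserving_snd.ae (ae_pos_of_measure_Iic_eq_zero h₀))

lemma isFiniteMeasure_of_integrable_one_add_rpow (h₀ : μ (Iic 0) = 0)
    (hi : Integrable (fun v ↦ 1 + v ^ γ) μ) : IsFiniteMeasure μ := by
  refine (integrable_const_iff_isFiniteMeasure (one_ne_zero (α := ℝ))).1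
    (hi.mono' aestronglyMeasurable_const ?_)
  filter_upwards [ae_pos_of_measure_Iic_eq_zero h₀] with v hv
  simpa using Real.rpow_nonneg hv.le γ

lemma measureReal_univ_le_integral_one_add_rpow (h₀ : μ (Iic 0) = 0)
    (hi : Integrable (fun v ↦ 1 + v ^ γ) μ) : μ.real univ ≤ ∫ v, (1 + v ^ γ) ∂μ := by
  have := isFiniteMeasure_of_integrable_one_add_rpow h₀ hi
  calc μ.real univ = ∫ _, (1 : ℝ) ∂μ := by simp
    _ ≤ ∫ v, (1 + v ^ γ) ∂μ := integral_mono_ae (integrable_const _) hi <| by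
        filter_upwards [ae_pos_of_measure_Iic_eq_zero h₀] with v hv
        simpa using Real.rpow_nonneg hv.le γ

lemma integral_sub_le_setIntegral_Iic (h₀ : μ (Iic 0) = 0)
    (hi : Integrable (fun v ↦ 1 + v ^ γ) μ) (hm : Integrable (fun v ↦ v) μ) (hγ : 1 ≤ γ)
    {L : ℝ} (hL : 0 < L) :
    (∫ v, v ∂μ) - L ^ (1 - γ) * ∫ v, (1 + v ^ γ) ∂μ ≤ ∫ v in Iic L, v ∂μ := by
  rw [← integral_const_mul, ← integral_sub hm (hi.const_mul _),
    ← integral_indicator measurableSet_Iic]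
  refine integral_mono_ae (hm.sub (hi.const_mul _)) (hm.indicator measurableSet_Iic) ?_
  filter_upwards [ae_pos_of_measure_Iic_eq_zero h₀] with v hv
  have : 0 ≤ v ^ γ := by positivity
  have : 0 ≤ L ^ (1 - γ) := by positivity
  rcases le_or_gt v L with hvL | hLv
  · rw [indicator_of_mem (mem_Iic.2 hvL)]
    exact sub_le_self _ (by positivity)
  · rw [indicator_of_notMem (notMem_Iic.2 hLv), sub_nonpos]
    calc v = v ^ (1 - γ) * v ^ γ := by
          rw [← Real.rpow_add hv, sub_add_cancel, Real.rpow_one]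
      _ ≤ L ^ (1 - γ) * v ^ γ := by
          gcongr ?_ * _
          exact Real.rpow_le_rpow_of_nonpos hL hLv.le (by linarith)
      _ ≤ L ^ (1 - γ) * (1 + v ^ γ) := by gcongr; linarith

end PositiveSizes

/-! ### Measurability of families of measures -/

section MeasurableFamily

open scoped BoundedContinuousFunction

lemma measurable_of_forall_measurable_integral {S X : Type*} [MeasurableSpace S]
    [TopologicalSpace X] [MeasurableSpace X] [BorelSpace X] [HasOuterApproxClosed X]
    {μ : S → Measure X} [∀ s, IsFiniteMeasure (μ s)]
    (h : ∀ φ : X →ᵇ ℝ, Measurable fun s ↦ ∫ x, φ x ∂μ s) : Measurable μ := by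
  have hlintegral (φ : X →ᵇ NNReal) : Measurable fun s ↦ ∫⁻ x, φ x ∂μ s := by
    have hφ : Measurable fun s ↦ ∫ x, (φ x : ℝ) ∂μ s :=
      h (φ.comp _ NNReal.isometry_coe.lipschitz)
    convert! hφ.ennreal_ofReal using 2 with s
    have hint : Integrable (fun x ↦ (φ x : ℝ)) (μ s) :=
      BoundedContinuousFunction.integrable_of_nnreal _ φ
    rw [ofReal_integral_eq_lintegral_ofReal hint (ae_of_all _ fun x ↦ (φ x).2)]
    simp only [ENNReal.ofReal_coe_nnreal]
  refine Measurable.measure_of_isPiSystem (S := {s | IsClosed s})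
    (by rw [BorelSpace.measurable_eq (α := X), borel_eq_generateFrom_isClosed])
    isPiSystem_isClosed (fun s hs ↦ ?_) (by simpa using hlintegral 1)
  exact measurable_of_tendsto_metrizable (fun n ↦ hlintegral (IsClosed.apprSeq hs n))
    (tendsto_pi_nhds.2 fun a ↦ HasOuterApproxClosed.tendsto_lintegral_apprSeq hs (μ a))

lemma aestronglyMeasurable_integral_prod_self {μ : ℝ → Measure ℝ} {S : Set ℝ}
    (hS : MeasurableSet S) (hμ : Measurable fun s : S ↦ μ s) {C : ℝ}
    (hC : ∀ s ∈ S, IsFiniteMeasure (μ s) ∧ (μ s).real univ ≤ C)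
    {G : ℝ × ℝ → ℝ} (hG : Measurable G) :
    AEStronglyMeasurable (fun s ↦ ∫ p, G p ∂(μ s).prod (μ s)) (volume.restrict S) := by
  let κ : ProbabilityTheory.Kernel S ℝ := ⟨fun s ↦ μ s, hμ⟩
  have : ProbabilityTheory.IsFiniteKernel κ := by
    refine ⟨ENNReal.ofReal C, ENNReal.ofReal_lt_top, fun s ↦ ?_⟩
    have := (hC s s.2).1
    exact (ofReal_measureReal (μ := μ s)).symm.trans_le (ENNReal.ofReal_le_ofReal (hC s s.2).2)
  have hint := StronglyMeasurable.integral_kernel (κ := κ.prod κ) hG.stronglyMeasurable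
  simp only [ProbabilityTheory.Kernel.prod_apply] at hint
  exact (aemeasurable_restrict_of_measurable_subtype hS hint.measurable).aestronglyMeasurable

end MeasurableFamily

/-! ### The collision operator -/

/-- The change of the observable `φ` when clusters of sizes `p.1` and `p.2` merge. -/
def mergerIncrement (φ : ℝ → ℝ) (p : ℝ × ℝ) : ℝ := φ (p.1 + p.2) - φ p.1 - φ p.2

/-- The integral `∬ K(v,v') [φ(v+v') - φ(v) - φ(v')] μ(dv) μ(dv')` of the weak formulation, as an
integral over the product measure and without the factor `1/2`. -/
def coagulationRate (K : ℝ → ℝ → ℝ) (μ : Measure ℝ) (φ : ℝ → ℝ) : ℝ :=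
  ∫ p, K p.1 p.2 * mergerIncrement φ p ∂μ.prod μ

/-- A measurable coagulation kernel of growth at most `A * (v ^ γ + v' ^ γ)`. Both conditions
concern positive sizes only, the values of `K` elsewhere being arbitrary. -/
structure IsPowerBoundedKernel (K : ℝ → ℝ → ℝ) (γ A : ℝ) : Prop where
  measurable_indicator : Measurable ((Ioi 0 ×ˢ Ioi 0).indicator (Function.uncurry K))
  abs_le : ∀ v v', 0 < v → 0 < v' → |K v v'| ≤ A * (v ^ γ + v' ^ γ)

/-- The observable `φ` differs from the multiple `B * v` of the mass by at most `Z`. Such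
observables may be tested in the weak formulation, since mergers conserve mass. -/
structure IsLinearUpToBounded (φ : ℝ → ℝ) (B Z : ℝ) : Prop where
  continuous : Continuous φ
  abs_sub_le : ∀ v, 0 ≤ v → |φ v - B * v| ≤ Z

section Collision

variable {K : ℝ → ℝ → ℝ} {γ A B Z : ℝ} {φ : ℝ → ℝ} {μ : Measure ℝ}

lemma mergerIncrement_sub_mul (φ : ℝ → ℝ) (B : ℝ) :
    mergerIncrement (fun v ↦ φ v - B * v) = mergerIncrement φ := by
  funext p
  simp only [mergerIncrement]
  ring

lemma continuous_mergerIncrement (hφ : Continuous φ) : Continuous (mergerIncrement φ) := by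
  unfold mergerIncrement
  fun_prop

lemma coagulationRate_sub_mul (K : ℝ → ℝ → ℝ) (μ : Measure ℝ) (φ : ℝ → ℝ) (B : ℝ) :
    coagulationRate K μ (fun v ↦ φ v - B * v) = coagulationRate K μ φ := by
  simp only [coagulationRate, mergerIncrement_sub_mul]

lemma IsLinearUpToBounded.abs_mergerIncrement_le (hφ : IsLinearUpToBounded φ B Z) {p : ℝ × ℝ}
    (h₁ : 0 ≤ p.1) (h₂ : 0 ≤ p.2) : |mergerIncrement φ p| ≤ 3 * Z := by
  rw [← mergerIncrement_sub_mul φ B]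
  have h₁₂ := abs_le.1 (hφ.abs_sub_le _ (add_nonneg h₁ h₂))
  have h₁ := abs_le.1 (hφ.abs_sub_le _ h₁)
  have h₂ := abs_le.1 (hφ.abs_sub_le _ h₂)
  simp only [mergerIncrement, abs_le]
  constructor <;> linarith

lemma IsPowerBoundedKernel.nonneg (hK : IsPowerBoundedKernel K γ A) : 0 ≤ A := by
  have := (abs_nonneg _).trans (hK.abs_le 1 1 one_pos one_pos)
  rw [Real.one_rpow] at this
  linarith

lemma IsPowerBoundedKernel.norm_mul_mergerIncrement_le (hK : IsPowerBoundedKernel K γ A)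
    (hφ : IsLinearUpToBounded φ B Z) {p : ℝ × ℝ} (h₁ : 0 < p.1) (h₂ : 0 < p.2) :
    ‖K p.1 p.2 * mergerIncrement φ p‖ ≤ 3 * A * Z * ((1 + p.1 ^ γ) * (1 + p.2 ^ γ)) := by
  have hA := hK.nonneg
  have hZ : 0 ≤ Z := (abs_nonneg _).trans (hφ.abs_sub_le 0 le_rfl)
  have h₁γ : 0 ≤ p.1 ^ γ := by positivity
  have h₂γ : 0 ≤ p.2 ^ γ := by positivity
  calc ‖K p.1 p.2 * mergerIncrement φ p‖
      = |K p.1 p.2| * |mergerIncrement φ p| := by rw [Real.norm_eq_abs, abs_mul]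
    _ ≤ A * (p.1 ^ γ + p.2 ^ γ) * (3 * Z) := by
        gcongr
        exacts [hK.abs_le _ _ h₁ h₂, hφ.abs_mergerIncrement_le h₁.le h₂.le]
    _ ≤ A * ((1 + p.1 ^ γ) * (1 + p.2 ^ γ)) * (3 * Z) := by
        gcongr
        nlinarith [mul_nonneg h₁γ h₂γ]
    _ = 3 * A * Z * ((1 + p.1 ^ γ) * (1 + p.2 ^ γ)) := by ring

lemma kernel_mul_mergerIncrement_ae_eq_indicator (h₀ : μ (Iic 0) = 0) :
    (fun p ↦ K p.1 p.2 * mergerIncrement φ p) =ᵐ[μ.prod μ] fun p ↦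
      (Ioi 0 ×ˢ Ioi 0).indicator (Function.uncurry K) p * mergerIncrement φ p := by
  filter_upwards [ae_prod_pos_of_measure_Iic_eq_zero h₀] with p hp
  rw [indicator_of_mem (show p ∈ Ioi 0 ×ˢ Ioi 0 from hp)]
  rfl

lemma IsPowerBoundedKernel.measurable_indicator_mul_mergerIncrement
    (hK : IsPowerBoundedKernel K γ A) (hφ : Continuous φ) :
    Measurable fun p ↦
      (Ioi 0 ×ˢ Ioi 0).indicator (Function.uncurry K) p * mergerIncrement φ p :=
  hK.measurable_indicator.mul (continuous_mergerIncrement hφ).measurable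

lemma IsPowerBoundedKernel.aestronglyMeasurable_mul_mergerIncrement
    (hK : IsPowerBoundedKernel K γ A) (hφ : Continuous φ) (h₀ : μ (Iic 0) = 0) :
    AEStronglyMeasurable (fun p ↦ K p.1 p.2 * mergerIncrement φ p) (μ.prod μ) :=
  (hK.measurable_indicator_mul_mergerIncrement hφ).aestronglyMeasurable.congr
    (kernel_mul_mergerIncrement_ae_eq_indicator h₀).symm

lemma IsPowerBoundedKernel.ae_norm_mul_mergerIncrement_le
    (hK : IsPowerBoundedKernel K γ A) (hφ : IsLinearUpToBounded φ B Z) (h₀ : μ (Iic 0) = 0) :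
    ∀ᵐ p ∂μ.prod μ, ‖K p.1 p.2 * mergerIncrement φ p‖ ≤
      3 * A * Z * ((1 + p.1 ^ γ) * (1 + p.2 ^ γ)) := by
  filter_upwards [ae_prod_pos_of_measure_Iic_eq_zero h₀] with p hp
  exact hK.norm_mul_mergerIncrement_le hφ hp.1 hp.2

lemma IsPowerBoundedKernel.integrable_mul_mergerIncrement
    (hK : IsPowerBoundedKernel K γ A) (hφ : IsLinearUpToBounded φ B Z) (h₀ : μ (Iic 0) = 0)
    (hi : Integrable (fun v ↦ 1 + v ^ γ) μ) :
    Integrable (fun p ↦ K p.1 p.2 * mergerIncrement φ p) (μ.prod μ) :=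
  ((hi.mul_prod hi).const_mul _).mono'
    (hK.aestronglyMeasurable_mul_mergerIncrement hφ.continuous h₀)
    (hK.ae_norm_mul_mergerIncrement_le hφ h₀)

lemma IsPowerBoundedKernel.abs_coagulationRate_le [SFinite μ]
    (hK : IsPowerBoundedKernel K γ A) (hφ : IsLinearUpToBounded φ B Z) (h₀ : μ (Iic 0) = 0)
    (hi : Integrable (fun v ↦ 1 + v ^ γ) μ) :
    |coagulationRate K μ φ| ≤ 3 * A * Z * (∫ v, (1 + v ^ γ) ∂μ) ^ 2 := by
  calc |coagulationRate K μ φ|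
      ≤ ∫ p, 3 * A * Z * ((1 + p.1 ^ γ) * (1 + p.2 ^ γ)) ∂μ.prod μ :=
        norm_integral_le_of_norm_le ((hi.mul_prod hi).const_mul _)
          (hK.ae_norm_mul_mergerIncrement_le hφ h₀)
    _ = 3 * A * Z * (∫ v, (1 + v ^ γ) ∂μ) ^ 2 := by
        rw [integral_const_mul, integral_prod_mul (fun v ↦ 1 + v ^ γ) (fun v ↦ 1 + v ^ γ), sq]

lemma IsPowerBoundedKernel.tendsto_coagulationRate {ι : Type*} {l : Filter ι}
    [l.IsCountablyGenerated] {ψ : ι → ℝ → ℝ} (hK : IsPowerBoundedKernel K γ A)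
    (hψ : ∀ᶠ i in l, IsLinearUpToBounded (ψ i) B Z)
    (hlim : ∀ v, 0 < v → Tendsto (fun i ↦ ψ i v) l (nhds (φ v)))
    (h₀ : μ (Iic 0) = 0) (hi : Integrable (fun v ↦ 1 + v ^ γ) μ) :
    Tendsto (fun i ↦ coagulationRate K μ (ψ i)) l (nhds (coagulationRate K μ φ)) := by
  refine tendsto_integral_filter_of_dominated_convergence _
    (hψ.mono fun i hi' ↦ hK.aestronglyMeasurable_mul_mergerIncrement hi'.continuous h₀)
    (hψ.mono fun i hi' ↦ hK.ae_norm_mul_mergerIncrement_le hi' h₀)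
    ((hi.mul_prod hi).const_mul _) ?_
  filter_upwards [ae_prod_pos_of_measure_Iic_eq_zero h₀] with p hp
  exact (((hlim _ (add_pos hp.1 hp.2)).sub (hlim _ hp.1)).sub (hlim _ hp.2)).const_mul _

end Collision

/-! ### The weak formulation between two times -/

/-- A continuous cutoff with values in `[0, 1]`, supported in `[1/N, N]`. -/
def cutoff (N v : ℝ) : ℝ := max 0 (min 1 (min (N * v - 1) (N - v)))

section Cutoff

variable {N : ℝ}

lemma continuous_cutoff (N : ℝ) : Continuous (cutoff N) := by
  unfold cutoff
  fun_prop

lemma abs_cutoff_le_one (N v : ℝ) : |cutoff N v| ≤ 1 := by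
  rw [cutoff, abs_of_nonneg (le_max_left _ _)]
  exact max_le zero_le_one (min_le_left _ _)

lemma tsupport_cutoff_subset (hN : 0 < N) : tsupport (cutoff N) ⊆ Icc (1 / N) N := by
  refine closure_minimal (fun v hv ↦ ?_) isClosed_Icc
  by_contra hout
  refine hv (max_eq_left ((min_le_right _ _).trans (min_le_iff.2 ?_)))
  rw [mem_Icc, not_and_or, not_le, not_le, lt_div_iff₀ hN] at hout
  exact hout.imp (fun h ↦ by linarith) fun h ↦ by linarith

lemma tendsto_cutoff {v : ℝ} (hv : 0 < v) : Tendsto (cutoff · v) atTop (nhds 1) := by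
  refine tendsto_const_nhds.congr' ?_
  filter_upwards [eventually_ge_atTop (2 / v), eventually_ge_atTop (v + 1)] with N hN hNv
  have hNv' : 2 ≤ N * v := (div_le_iff₀ hv).1 hN
  rw [cutoff, min_eq_left (le_min (by linarith) (by linarith)), max_eq_right zero_le_one]

end Cutoff

section WeakSolution

variable {K : ℝ → ℝ → ℝ} {γ A B Z T a b t : ℝ} {f : ℝ → Measure ℝ} {fin : Measure ℝ}
  {φ : ℝ → ℝ} {ι : Type*} {l : Filter ι} {ψ : ι → ℝ → ℝ}

lemma IsLinearUpToBounded.sub_mul (hφ : IsLinearUpToBounded φ B Z) :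
    IsLinearUpToBounded (fun v ↦ φ v - B * v) 0 Z :=
  ⟨by have := hφ.continuous; fun_prop, by simpa using hφ.abs_sub_le⟩

lemma IsLinearUpToBounded.cutoff_mul (hφ : IsLinearUpToBounded φ 0 Z) (N : ℝ) :
    IsLinearUpToBounded (fun v ↦ cutoff N v * φ v) 0 Z where
  continuous := (continuous_cutoff N).mul hφ.continuous
  abs_sub_le v hv := by
    have hφv : |φ v| ≤ Z := by simpa using hφ.abs_sub_le v hv
    rw [zero_mul, sub_zero, abs_mul]
    exact (mul_le_of_le_one_left (abs_nonneg _) (abs_cutoff_le_one N v)).trans hφv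

lemma IsWeakSolution.isFiniteMeasure (hf : IsWeakSolution K γ T f fin) (ht : t ∈ Icc 0 T) :
    IsFiniteMeasure (f t) :=
  have ⟨_, hC⟩ := hf.moment_bound
  isFiniteMeasure_of_integrable_one_add_rpow (hf.conc t ht) (hC t ht).1

lemma IsWeakSolution.ae_abs_le (hf : IsWeakSolution K γ T f fin)
    (hφ : IsLinearUpToBounded φ 0 Z) (ht : t ∈ Icc 0 T) : ∀ᵐ v ∂f t, |φ v| ≤ Z := by
  filter_upwards [ae_pos_of_measure_Iic_eq_zero (hf.conc t ht)] with v hv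
  simpa using hφ.abs_sub_le v hv.le

lemma IsWeakSolution.measurable_subtype (hf : IsWeakSolution K γ T f fin) :
    Measurable fun s : Icc 0 T ↦ f s :=
  have (s : Icc 0 T) : IsFiniteMeasure (f s) := hf.isFiniteMeasure s.2
  measurable_of_forall_measurable_integral fun φ ↦
    (hf.time_cont φ φ.continuous ⟨‖φ‖, φ.norm_coe_le_norm⟩).domRestrict.measurable

lemma IsWeakSolution.aestronglyMeasurable_coagulationRate (hf : IsWeakSolution K γ T f fin)
    (hK : IsPowerBoundedKernel K γ A) (hφ : Continuous φ) :
    AEStronglyMeasurable (fun s ↦ coagulationRate K (f s) φ) (volume.restrict (Icc 0 T)) := by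
  obtain ⟨C, hC⟩ := hf.moment_bound
  refine (aestronglyMeasurable_integral_prod_self measurableSet_Icc hf.measurable_subtype
    (C := C) (fun s hs ↦ ⟨hf.isFiniteMeasure hs, ?_⟩)
    (hK.measurable_indicator_mul_mergerIncrement hφ)).congr ?_
  · exact (measureReal_univ_le_integral_one_add_rpow (hf.conc s hs) (hC s hs).1).trans (hC s hs).2
  · filter_upwards [ae_restrict_mem measurableSet_Icc] with s hs
    exact integral_congr_ae (kernel_mul_mergerIncrement_ae_eq_indicator (hf.conc s hs)).symm

lemma IsWeakSolution.exists_abs_coagulationRate_le (hf : IsWeakSolution K γ T f fin)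
    (hK : IsPowerBoundedKernel K γ A) (B Z : ℝ) :
    ∃ D, ∀ φ, IsLinearUpToBounded φ B Z → ∀ s ∈ Icc 0 T, |coagulationRate K (f s) φ| ≤ D := by
  obtain ⟨C, hC⟩ := hf.moment_bound
  refine ⟨3 * A * Z * C ^ 2, fun φ hφ s hs ↦ ?_⟩
  have := hf.isFiniteMeasure hs
  have hA := hK.nonneg
  have hZ : 0 ≤ Z := (abs_nonneg _).trans (hφ.abs_sub_le 0 le_rfl)
  have hmom : 0 ≤ ∫ v, (1 + v ^ γ) ∂f s := measureReal_nonneg.trans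
    (measureReal_univ_le_integral_one_add_rpow (hf.conc s hs) (hC s hs).1)
  calc |coagulationRate K (f s) φ| ≤ 3 * A * Z * (∫ v, (1 + v ^ γ) ∂f s) ^ 2 :=
        hK.abs_coagulationRate_le hφ (hf.conc s hs) (hC s hs).1
    _ ≤ 3 * A * Z * C ^ 2 := by gcongr; exact (hC s hs).2

lemma IsWeakSolution.aestronglyMeasurable_coagulationRate_uIoc (hf : IsWeakSolution K γ T f fin)
    (hK : IsPowerBoundedKernel K γ A) (hφ : Continuous φ) (ha : a ∈ Icc 0 T)
    (hb : b ∈ Icc 0 T) :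
    AEStronglyMeasurable (fun s ↦ coagulationRate K (f s) φ) (volume.restrict (uIoc a b)) :=
  (hf.aestronglyMeasurable_coagulationRate hK hφ).mono_measure
    (Measure.restrict_mono (uIoc_subset_uIcc.trans (ordConnected_Icc.uIcc_subset ha hb)) le_rfl)

lemma IsWeakSolution.intervalIntegrable_coagulationRate (hf : IsWeakSolution K γ T f fin)
    (hK : IsPowerBoundedKernel K γ A) (hφ : IsLinearUpToBounded φ B Z) (ha : a ∈ Icc 0 T)
    (hb : b ∈ Icc 0 T) :
    IntervalIntegrable (fun s ↦ coagulationRate K (f s) φ) volume a b := by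
  obtain ⟨D, hD⟩ := hf.exists_abs_coagulationRate_le hK B Z
  refine (intervalIntegrable_const (c := D)).mono_fun'
    (hf.aestronglyMeasurable_coagulationRate_uIoc hK hφ.continuous ha hb) ?_
  filter_upwards [ae_restrict_mem measurableSet_uIoc] with s hs
  exact hD φ hφ s (ordConnected_Icc.uIcc_subset ha hb (uIoc_subset_uIcc hs))

lemma IsWeakSolution.tendsto_integral_coagulationRate [l.IsCountablyGenerated]
    (hf : IsWeakSolution K γ T f fin) (hK : IsPowerBoundedKernel K γ A)
    (hψ : ∀ᶠ i in l, IsLinearUpToBounded (ψ i) B Z)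
    (hlim : ∀ v, 0 < v → Tendsto (fun i ↦ ψ i v) l (nhds (φ v)))
    (ha : a ∈ Icc 0 T) (hb : b ∈ Icc 0 T) :
    Tendsto (fun i ↦ ∫ s in a..b, coagulationRate K (f s) (ψ i)) l
      (nhds (∫ s in a..b, coagulationRate K (f s) φ)) := by
  have hsub : uIoc a b ⊆ Icc 0 T :=
    uIoc_subset_uIcc.trans (ordConnected_Icc.uIcc_subset ha hb)
  obtain ⟨C, hC⟩ := hf.moment_bound
  obtain ⟨D, hD⟩ := hf.exists_abs_coagulationRate_le hK B Z
  refine intervalIntegral.tendsto_integral_filter_of_dominated_convergence (fun _ ↦ D)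
    (hψ.mono fun i hi ↦
      hf.aestronglyMeasurable_coagulationRate_uIoc hK hi.continuous ha hb)
    (hψ.mono fun i hi ↦ ae_of_all _ fun s hs ↦ hD _ hi s (hsub hs))
    intervalIntegrable_const (ae_of_all _ fun s hs ↦ ?_)
  exact hK.tendsto_coagulationRate hψ hlim (hf.conc s (hsub hs)) (hC s (hsub hs)).1

lemma IsWeakSolution.tendsto_integral_of_bounded [l.IsCountablyGenerated]
    (hf : IsWeakSolution K γ T f fin) (hψ : ∀ᶠ i in l, IsLinearUpToBounded (ψ i) 0 Z)
    (hlim : ∀ v, 0 < v → Tendsto (fun i ↦ ψ i v) l (nhds (φ v))) (ht : t ∈ Icc 0 T) :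
    Tendsto (fun i ↦ ∫ v, ψ i v ∂f t) l (nhds (∫ v, φ v ∂f t)) := by
  have := hf.isFiniteMeasure ht
  exact tendsto_integral_filter_of_dominated_convergence (fun _ ↦ Z)
    (hψ.mono fun i hi ↦ hi.continuous.aestronglyMeasurable)
    (hψ.mono fun i hi ↦ hf.ae_abs_le hi ht) (integrable_const _)
    ((ae_pos_of_measure_Iic_eq_zero (hf.conc t ht)).mono hlim)

lemma IsWeakSolution.integral_sub_integral_of_hasCompactSupport
    (hf : IsWeakSolution K γ T f fin) (hK : IsPowerBoundedKernel K γ A) (hφ : Continuous φ)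
    (hc : HasCompactSupport φ) (hsupp : tsupport φ ⊆ Ioi 0) (ha : a ∈ Icc 0 T)
    (hb : b ∈ Icc 0 T) :
    (∫ v, φ v ∂f b) - ∫ v, φ v ∂f a = 1 / 2 * ∫ s in a..b, coagulationRate K (f s) φ := by
  obtain ⟨C, hC⟩ := hf.moment_bound
  obtain ⟨Z, hZ⟩ := hc.exists_bound_of_continuous hφ
  have hφZ : IsLinearUpToBounded φ 0 Z := ⟨hφ, fun v _ ↦ by simpa using hZ v⟩
  have h0 : (0 : ℝ) ∈ Icc 0 T := ⟨le_rfl, ha.1.trans ha.2⟩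
  have from_zero {t : ℝ} (ht : t ∈ Icc 0 T) :
      (∫ v, φ v ∂f t) - ∫ v, φ v ∂fin = 1 / 2 * ∫ s in 0..t, coagulationRate K (f s) φ := by
    rw [hf.weak_form φ hφ hc hsupp t ht]
    congr 1
    refine intervalIntegral.integral_congr fun s hs ↦ ?_
    have hs := ordConnected_Icc.uIcc_subset h0 ht hs
    have := hf.isFiniteMeasure hs
    exact (integral_prod _
      (hK.integrable_mul_mergerIncrement hφZ (hf.conc s hs) (hC s hs).1)).symm
  rw [← intervalIntegral.integral_interval_sub_left
    (hf.intervalIntegrable_coagulationRate hK hφZ h0 hb)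
    (hf.intervalIntegrable_coagulationRate hK hφZ h0 ha), mul_sub, ← from_zero ha,
    ← from_zero hb, sub_sub_sub_cancel_right]

lemma IsWeakSolution.integral_sub_integral_of_bounded (hf : IsWeakSolution K γ T f fin)
    (hK : IsPowerBoundedKernel K γ A) (hφ : IsLinearUpToBounded φ 0 Z) (ha : a ∈ Icc 0 T)
    (hb : b ∈ Icc 0 T) :
    (∫ v, φ v ∂f b) - ∫ v, φ v ∂f a = 1 / 2 * ∫ s in a..b, coagulationRate K (f s) φ := by
  have hbdd : ∀ᶠ N in atTop, IsLinearUpToBounded (fun v ↦ cutoff N v * φ v) 0 Z :=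
    .of_forall hφ.cutoff_mul
  have hlim (v : ℝ) (hv : 0 < v) :
      Tendsto (fun N ↦ cutoff N v * φ v) atTop (nhds (φ v)) := by
    simpa only [one_mul] using (tendsto_cutoff hv).mul_const (φ v)
  refine tendsto_nhds_unique_of_eventuallyEq
    ((hf.tendsto_integral_of_bounded hbdd hlim hb).sub
      (hf.tendsto_integral_of_bounded hbdd hlim ha))
    ((hf.tendsto_integral_coagulationRate hK hbdd hlim ha hb).const_mul _) ?_
  filter_upwards [eventually_gt_atTop 0] with N hN
  have hsupp : tsupport (fun v ↦ cutoff N v * φ v) ⊆ Icc (1 / N) N :=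
    (tsupport_mul_subset_left (f := cutoff N)).trans (tsupport_cutoff_subset hN)
  exact hf.integral_sub_integral_of_hasCompactSupport hK (hφ.cutoff_mul N).continuous
    (isCompact_Icc.of_isClosed_subset (isClosed_tsupport _) hsupp)
    (fun v hv ↦ (one_div_pos.2 hN).trans_le (hsupp hv).1) ha hb

lemma IsWeakSolution.integrable_sub_mul (hf : IsWeakSolution K γ T f fin)
    (hφ : IsLinearUpToBounded φ B Z) (ht : t ∈ Icc 0 T) :
    Integrable (fun v ↦ φ v - B * v) (f t) :=
  have := hf.isFiniteMeasure ht
  (integrable_const Z).mono' hφ.sub_mul.continuous.aestronglyMeasurable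
    (hf.ae_abs_le hφ.sub_mul ht)

lemma IsWeakSolution.integrable (hf : IsWeakSolution K γ T f fin)
    (hmc : IsMassConserving T f fin) (hφ : IsLinearUpToBounded φ B Z) (ht : t ∈ Icc 0 T) :
    Integrable φ (f t) :=
  ((hf.integrable_sub_mul hφ ht).add ((hmc.2 t ht).1.const_mul B)).congr
    (ae_of_all _ fun _ ↦ sub_add_cancel _ _)

lemma IsWeakSolution.integral_sub_integral (hf : IsWeakSolution K γ T f fin)
    (hmc : IsMassConserving T f fin) (hK : IsPowerBoundedKernel K γ A)
    (hφ : IsLinearUpToBounded φ B Z) (ha : a ∈ Icc 0 T) (hb : b ∈ Icc 0 T) :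
    (∫ v, φ v ∂f b) - ∫ v, φ v ∂f a = 1 / 2 * ∫ s in a..b, coagulationRate K (f s) φ := by
  have hmass {t : ℝ} (ht : t ∈ Icc 0 T) :
      ∫ v, (φ v - B * v) ∂f t = (∫ v, φ v ∂f t) - B * ∫ v, v ∂fin := by
    rw [integral_sub (hf.integrable hmc hφ ht) ((hmc.2 t ht).1.const_mul B),
      integral_const_mul, (hmc.2 t ht).2]
  have h := hf.integral_sub_integral_of_bounded hK hφ.sub_mul ha hb
  rw [hmass ha, hmass hb, sub_sub_sub_cancel_right] at h
  simpa only [coagulationRate_sub_mul] using h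

lemma IsWeakSolution.continuousOn_integral (hf : IsWeakSolution K γ T f fin)
    (hmc : IsMassConserving T f fin) (hK : IsPowerBoundedKernel K γ A)
    (hφ : IsLinearUpToBounded φ B Z) : ContinuousOn (fun t ↦ ∫ v, φ v ∂f t) (Icc 0 T) := by
  rcases (Icc (0 : ℝ) T).eq_empty_or_nonempty with hempty | hne
  · rw [hempty]
    exact continuousOn_empty _
  have hT : 0 ≤ T := nonempty_Icc.1 hne
  have h0 : (0 : ℝ) ∈ Icc 0 T := left_mem_Icc.2 hT
  have hprim := intervalIntegral.continuousOn_primitive_interval'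
    (hf.intervalIntegrable_coagulationRate hK hφ h0 (right_mem_Icc.2 hT)) left_mem_uIcc
  rw [uIcc_of_le hT] at hprim
  refine ((hprim.const_mul (1 / 2)).add_const (∫ v, φ v ∂f 0)).congr fun t ht ↦ ?_
  exact sub_eq_iff_eq_add.1 (hf.integral_sub_integral hmc hK hφ h0 ht)

end WeakSolution

/-! ### Truncated tail moments -/

/-- The power `w ^ m` of a size `w ≥ 0`, continued linearly with slope `N ^ (m - 1)` beyond `N`. -/
def truncatedPow (N m w : ℝ) : ℝ := w * min w N ^ (m - 1)

/-- The observable whose integral is the truncation of the tail moment `∫_{[R,∞)} (v - R) ^ m`. -/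
def tailTest (R N m v : ℝ) : ℝ := truncatedPow N m (max (v - R) 0)

section TruncatedPow

variable {R N m w u x y : ℝ}

lemma truncatedPow_nonneg (hN : 0 ≤ N) (hw : 0 ≤ w) : 0 ≤ truncatedPow N m w :=
  mul_nonneg hw (Real.rpow_nonneg (le_min hw hN) _)

lemma min_rpow_le_min_rpow (hm : 1 ≤ m) (hN : 0 ≤ N) (hx : 0 ≤ x) (hxy : x ≤ y) :
    min x N ^ (m - 1) ≤ min y N ^ (m - 1) :=
  Real.rpow_le_rpow (le_min hx hN) (min_le_min_right _ hxy) (sub_nonneg.2 hm)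

lemma truncatedPow_mono (hm : 1 ≤ m) (hN : 0 ≤ N) (hx : 0 ≤ x) (hxy : x ≤ y) :
    truncatedPow N m x ≤ truncatedPow N m y :=
  mul_le_mul hxy (min_rpow_le_min_rpow hm hN hx hxy) (Real.rpow_nonneg (le_min hx hN) _)
    (hx.trans hxy)

lemma truncatedPow_eq_rpow (hm : 1 ≤ m) (hw : 0 ≤ w) (hwN : w ≤ N) :
    truncatedPow N m w = w ^ m := by
  rw [truncatedPow, min_eq_left hwN, ← Real.rpow_one_add' hw (by linarith), add_sub_cancel]

lemma truncatedPow_le_mul (hm : 1 ≤ m) (hN : 0 ≤ N) (hw : 0 ≤ w) :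
    truncatedPow N m w ≤ N ^ (m - 1) * w := by
  rw [truncatedPow, mul_comm]
  gcongr
  exact min_le_right _ _

lemma mul_sub_le_truncatedPow (hN : 0 ≤ N) (hw : 0 ≤ w) :
    N ^ (m - 1) * (w - N) ≤ truncatedPow N m w := by
  rcases le_total w N with hwN | hNw
  · exact (mul_nonpos_of_nonneg_of_nonpos (Real.rpow_nonneg hN _) (sub_nonpos.2 hwN)).trans
      (truncatedPow_nonneg hN hw)
  · rw [truncatedPow, min_eq_right hNw, mul_comm w]
    exact mul_le_mul_of_nonneg_left (sub_le_self _ hN) (Real.rpow_nonneg hN _)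

lemma min_rpow_mul_le_truncatedPow_add_sub (hm : 1 ≤ m) (hN : 0 ≤ N) (hw : 0 ≤ w) (hu : 0 ≤ u) :
    min w N ^ (m - 1) * u ≤ truncatedPow N m (w + u) - truncatedPow N m w := by
  have h := mul_le_mul_of_nonneg_left
    (min_rpow_le_min_rpow hm hN hw (le_add_of_nonneg_right hu)) (add_nonneg hw hu)
  simp only [truncatedPow]
  linarith

lemma truncatedPow_add_le (hm : 1 ≤ m) (hN : 0 ≤ N) (hx : 0 ≤ x) (hy : 0 ≤ y) :
    truncatedPow N m x + truncatedPow N m y ≤ truncatedPow N m (x + y) := by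
  simp only [truncatedPow, add_mul]
  gcongr ?_ * ?_ + ?_ * ?_
  · exact min_rpow_le_min_rpow hm hN hx (le_add_of_nonneg_right hy)
  · exact min_rpow_le_min_rpow hm hN hy (le_add_of_nonneg_left hx)

lemma mul_rpow_mul_le_add_rpow_sub_rpow (hm : 1 ≤ m) (hw : 0 < w) (hu : 0 ≤ u) :
    m * w ^ (m - 1) * u ≤ (w + u) ^ m - w ^ m := by
  have hbernoulli := one_add_mul_self_le_rpow_one_add
    (by linarith [div_nonneg hu hw.le] : -1 ≤ u / w) hm
  calc m * w ^ (m - 1) * u = w ^ m * (1 + m * (u / w)) - w ^ m := by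
        rw [Real.rpow_sub_one hw.ne']
        ring
    _ ≤ w ^ m * (1 + u / w) ^ m - w ^ m := by gcongr
    _ = (w + u) ^ m - w ^ m := by
        rw [← Real.mul_rpow hw.le (by positivity), mul_add, mul_one, mul_div_cancel₀ _ hw.ne']

lemma mul_min_rpow_mul_le_truncatedPow_add_sub (hm : 1 ≤ m) (hw : 0 < w) (hu : 0 ≤ u)
    (hwu : w + u ≤ N) :
    m * (min w N ^ (m - 1) * u) ≤ truncatedPow N m (w + u) - truncatedPow N m w := by
  rw [truncatedPow_eq_rpow hm hw.le (by linarith), truncatedPow_eq_rpow hm (by linarith) hwu,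
    min_eq_left (by linarith), ← mul_assoc]
  exact mul_rpow_mul_le_add_rpow_sub_rpow hm hw hu

lemma tailTest_nonneg (hN : 0 ≤ N) (v : ℝ) : 0 ≤ tailTest R N m v :=
  truncatedPow_nonneg hN (le_max_right _ _)

lemma tailTest_of_le {v : ℝ} (hv : v ≤ R) : tailTest R N m v = 0 := by
  rw [tailTest, max_eq_right (sub_nonpos.2 hv), truncatedPow, zero_mul]

lemma tailTest_of_ge {v : ℝ} (hv : R ≤ v) : tailTest R N m v = truncatedPow N m (v - R) := by
  rw [tailTest, max_eq_left (sub_nonneg.2 hv)]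

lemma continuous_tailTest (hm : 1 ≤ m) : Continuous (tailTest R N m) := by
  have : Continuous (truncatedPow N m) :=
    continuous_id.mul ((by fun_prop : Continuous fun w ↦ min w N).rpow_const
      fun _ ↦ Or.inr (sub_nonneg.2 hm))
  unfold tailTest
  fun_prop

lemma tailTest_le_mul (hm : 1 ≤ m) (hR : 0 ≤ R) (hN : 0 ≤ N) {v : ℝ} (hv : 0 ≤ v) :
    tailTest R N m v ≤ N ^ (m - 1) * v :=
  (truncatedPow_le_mul hm hN (le_max_right _ _)).trans <|
    mul_le_mul_of_nonneg_left (max_le (sub_le_self _ hR) hv) (Real.rpow_nonneg hN _)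

lemma isLinearUpToBounded_tailTest (hm : 1 ≤ m) (hR : 0 ≤ R) (hN : 0 ≤ N) :
    IsLinearUpToBounded (tailTest R N m) (N ^ (m - 1)) (N ^ (m - 1) * (N + R)) where
  continuous := continuous_tailTest hm
  abs_sub_le v hv := by
    have hslope : 0 ≤ N ^ (m - 1) := Real.rpow_nonneg hN _
    have hupper := tailTest_le_mul hm hR hN hv
    have hlower : N ^ (m - 1) * (v - R - N) ≤ tailTest R N m v :=
      (mul_le_mul_of_nonneg_left (sub_le_sub_right (le_max_left _ 0) N) hslope).trans
        (mul_sub_le_truncatedPow hN (le_max_right _ _))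
    have : 0 ≤ N ^ (m - 1) * (N + R) := mul_nonneg hslope (add_nonneg hN hR)
    rw [abs_le]
    constructor <;> linarith

lemma mergerIncrement_tailTest_nonneg (hm : 1 ≤ m) (hR : 0 ≤ R) (hN : 0 ≤ N) {p : ℝ × ℝ}
    (h₁ : 0 ≤ p.1) (h₂ : 0 ≤ p.2) : 0 ≤ mergerIncrement (tailTest R N m) p := by
  have hexcess : max (p.1 - R) 0 + max (p.2 - R) 0 ≤ max (p.1 + p.2 - R) 0 := by
    rcases max_cases (p.1 - R) 0 with h | h <;> rcases max_cases (p.2 - R) 0 with h' | h' <;>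
      rw [h.1, h'.1, le_max_iff] <;> first | (left; linarith) | (right; linarith)
  rw [mergerIncrement, sub_sub, sub_nonneg]
  exact (truncatedPow_add_le hm hN (le_max_right _ _) (le_max_right _ _)).trans
    (truncatedPow_mono hm hN (add_nonneg (le_max_right _ _) (le_max_right _ _)) hexcess)

end TruncatedPow

/-- The growth rate that a truncated tail moment acquires from the clusters `v` of excess
`w = v - R` with `min w N ^ (m - 1) ≥ lam`, per unit mass of their small collision partners. -/
def rateFactor (γ m N lam : ℝ) : ℝ := min (m * lam ^ ((γ - 1) / (m - 1))) ((N / 2) ^ (γ - 1))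

section Rate

variable {K : ℝ → ℝ → ℝ} {γ A c Λ R N L m lam w u : ℝ} {μ : Measure ℝ} {φ : ℝ → ℝ}

lemma rateFactor_nonneg (hm : 1 ≤ m) (hN : 0 ≤ N) (hlam : 0 ≤ lam) :
    0 ≤ rateFactor γ m N lam :=
  le_min (mul_nonneg (by linarith) (Real.rpow_nonneg hlam _)) (Real.rpow_nonneg (by linarith) _)

lemma exists_rateFactor_le_and_mul_le_truncatedPow_add_sub (hγ : 1 ≤ γ) (hm : 1 < m)
    (hN : 0 < N) (hw : 0 < w) (hu : 0 ≤ u) (huN : u ≤ N / 2) (hlam : 0 ≤ lam)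
    (hlamw : lam ≤ min w N ^ (m - 1)) :
    ∃ j, rateFactor γ m N lam ≤ j * w ^ (γ - 1) ∧
      j * (min w N ^ (m - 1) * u) ≤ truncatedPow N m (w + u) - truncatedPow N m w := by
  rcases le_or_gt w (N / 2) with hwN | hNw
  · refine ⟨m, (min_le_left _ _).trans ?_,
      mul_min_rpow_mul_le_truncatedPow_add_sub hm.le hw hu (by linarith)⟩
    rw [min_eq_left (by linarith)] at hlamw
    have hm₁ : 0 < m - 1 := by linarith
    calc m * lam ^ ((γ - 1) / (m - 1))
        ≤ m * (w ^ (m - 1)) ^ ((γ - 1) / (m - 1)) := by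
          gcongr
      _ = m * w ^ (γ - 1) := by rw [← Real.rpow_mul hw.le, mul_div_cancel₀ _ hm₁.ne']
  · refine ⟨1, (min_le_right _ _).trans ?_, ?_⟩
    · rw [one_mul]
      gcongr
    · rw [one_mul]
      exact min_rpow_mul_le_truncatedPow_add_sub hm.le hN.le hw.le hu

lemma rateFactor_mul_le (hγ : 1 ≤ γ) (hm : 1 < m) (hN : 0 < N) (hw : 0 ≤ w) (hu : 0 ≤ u)
    (huN : u ≤ N / 2) (hlam : 0 ≤ lam) :
    rateFactor γ m N lam * ((truncatedPow N m w - lam * w) * u) ≤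
      w ^ γ * (truncatedPow N m (w + u) - truncatedPow N m w) := by
  have hθ := rateFactor_nonneg (γ := γ) hm.le hN.le hlam
  have hfactor : truncatedPow N m w - lam * w = w * (min w N ^ (m - 1) - lam) := by
    rw [truncatedPow]
    ring
  rcases le_or_gt (min w N ^ (m - 1)) lam with hsmall | hlarge
  · have hneg : (truncatedPow N m w - lam * w) * u ≤ 0 := by
      rw [hfactor]
      exact mul_nonpos_of_nonpos_of_nonneg
        (mul_nonpos_of_nonneg_of_nonpos hw (sub_nonpos.2 hsmall)) hu
    exact (mul_nonpos_of_nonneg_of_nonpos hθ hneg).trans <| mul_nonneg (Real.rpow_nonneg hw _)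
      (sub_nonneg.2 (truncatedPow_mono hm.le hN.le hw (le_add_of_nonneg_right hu)))
  have hwpos : 0 < w := by
    refine hw.lt_of_ne' fun h ↦ hlarge.not_ge ?_
    rwa [h, min_eq_left hN.le, Real.zero_rpow (by linarith)]
  obtain ⟨j, hj, hincr⟩ := exists_rateFactor_le_and_mul_le_truncatedPow_add_sub hγ hm hN hwpos hu
    huN hlam hlarge.le
  calc rateFactor γ m N lam * ((truncatedPow N m w - lam * w) * u)
      ≤ rateFactor γ m N lam * ((w * min w N ^ (m - 1)) * u) := by
        rw [hfactor]
        gcongr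
        linarith
    _ ≤ j * w ^ (γ - 1) * ((w * min w N ^ (m - 1)) * u) := by gcongr
    _ = w ^ γ * (j * (min w N ^ (m - 1) * u)) := by
        rw [Real.rpow_sub_one hwpos.ne']
        field_simp
    _ ≤ w ^ γ * (truncatedPow N m (w + u) - truncatedPow N m w) := by gcongr

/-- A coagulation kernel of growth at most `A * (v ^ γ + v' ^ γ)` for which a large cluster meets
each cluster at least `Λ` times smaller at rate at least `c * v ^ γ`. -/
structure IsUnbalancedGrowthKernel (K : ℝ → ℝ → ℝ) (γ A c Λ : ℝ) : Prop
    extends IsPowerBoundedKernel K γ A where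
  one_lt : 1 < γ
  kernel_nonneg : ∀ v v', 0 < v → 0 < v' → 0 ≤ K v v'
  c_pos : 0 < c
  one_le_Λ : 1 ≤ Λ
  mul_rpow_le : ∀ v v', 0 < v' → Λ ≤ v → Λ * v' ≤ v → c * v ^ γ ≤ K v v'

lemma IsUnbalancedGrowthKernel.le_mul_mergerIncrement (hK : IsUnbalancedGrowthKernel K γ A c Λ)
    (hm : 1 < m) (hN : 0 < N) (hL : 0 ≤ L) (hLN : L ≤ N / 2) (hΛR : Λ ≤ R) (hLR : Λ * L ≤ R)
    (hlam : 0 ≤ lam) {p : ℝ × ℝ} (h₁ : 0 < p.1) (h₂ : 0 < p.2) :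
    c * rateFactor γ m N lam *
        ((tailTest R N m p.1 - lam * max (p.1 - R) 0) * (Iic L).indicator id p.2) ≤
      K p.1 p.2 * mergerIncrement (tailTest R N m) p := by
  have hR : 0 ≤ R := by linarith [hK.one_le_Λ]
  have hincr := mergerIncrement_tailTest_nonneg hm.le hR hN.le h₁.le h₂.le
  have hnonneg := mul_nonneg (hK.kernel_nonneg _ _ h₁ h₂) hincr
  rcases lt_or_ge p.1 R with hpR | hRp
  · simpa [tailTest_of_le hpR.le, hpR.le] using hnonneg
  rcases lt_or_ge L p.2 with hLp | hpL
  · simpa [indicator_of_notMem (notMem_Iic.2 hLp)] using hnonneg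
  have hw : 0 ≤ p.1 - R := sub_nonneg.2 hRp
  have hpR : p.2 ≤ R := hpL.trans ((le_mul_of_one_le_left hL hK.one_le_Λ).trans hLR)
  have hincr_eq : mergerIncrement (tailTest R N m) p =
      truncatedPow N m (p.1 - R + p.2) - truncatedPow N m (p.1 - R) := by
    rw [mergerIncrement, tailTest_of_le hpR, tailTest_of_ge hRp, tailTest_of_ge (by linarith),
      sub_zero, sub_add_eq_add_sub]
  have hkernel : c * (p.1 - R) ^ γ ≤ K p.1 p.2 := by
    refine (mul_le_mul_of_nonneg_left (Real.rpow_le_rpow hw (sub_le_self _ hR)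
      (zero_le_one.trans hK.one_lt.le)) hK.c_pos.le).trans
      (hK.mul_rpow_le _ _ h₂ (hΛR.trans hRp) ?_)
    exact (mul_le_mul_of_nonneg_left hpL (zero_le_one.trans hK.one_le_Λ)).trans (hLR.trans hRp)
  rw [indicator_of_mem (mem_Iic.2 hpL), max_eq_left hw, tailTest_of_ge hRp, id, mul_assoc]
  calc c * (rateFactor γ m N lam *
        ((truncatedPow N m (p.1 - R) - lam * (p.1 - R)) * p.2))
      ≤ c * ((p.1 - R) ^ γ * mergerIncrement (tailTest R N m) p) := by
        rw [hincr_eq]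
        exact mul_le_mul_of_nonneg_left (rateFactor_mul_le hK.one_lt.le hm hN hw h₂.le
          (hpL.trans hLN) hlam) hK.c_pos.le
    _ = c * (p.1 - R) ^ γ * mergerIncrement (tailTest R N m) p := (mul_assoc _ _ _).symm
    _ ≤ K p.1 p.2 * mergerIncrement (tailTest R N m) p := by gcongr

lemma max_sub_zero_ae_le (hR : 0 ≤ R) (h₀ : μ (Iic 0) = 0) : ∀ᵐ v ∂μ, max (v - R) 0 ≤ v :=
  (ae_pos_of_measure_Iic_eq_zero h₀).mono fun _ hv ↦ max_le (sub_le_self _ hR) hv.le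

lemma integrable_max_sub_zero (hR : 0 ≤ R) (h₀ : μ (Iic 0) = 0)
    (hmass : Integrable (fun v ↦ v) μ) : Integrable (fun v ↦ max (v - R) 0) μ :=
  hmass.mono' (by fun_prop) <| (max_sub_zero_ae_le hR h₀).mono fun v hv ↦ by
    rwa [Real.norm_of_nonneg (le_max_right _ _)]

lemma integral_div_two_le_integral_sub_mul_max (hR : 0 ≤ R) (h₀ : μ (Iic 0) = 0)
    (hmass : Integrable (fun v ↦ v) μ) (hpos : 0 < ∫ v, v ∂μ) (hφ : Integrable φ μ)
    (hφ₀ : 0 ≤ ∫ v, φ v ∂μ) :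
    (∫ v, φ v ∂μ) / 2 ≤
      ∫ v, (φ v - (∫ v, φ v ∂μ) / (2 * ∫ v, v ∂μ) * max (v - R) 0) ∂μ := by
  have hexcess := integrable_max_sub_zero hR h₀ hmass
  rw [integral_sub hφ (hexcess.const_mul _), integral_const_mul]
  have hle : (∫ v, φ v ∂μ) / (2 * ∫ v, v ∂μ) * ∫ v, max (v - R) 0 ∂μ ≤ (∫ v, φ v ∂μ) / 2 :=
    calc (∫ v, φ v ∂μ) / (2 * ∫ v, v ∂μ) * ∫ v, max (v - R) 0 ∂μ
        ≤ (∫ v, φ v ∂μ) / (2 * ∫ v, v ∂μ) * ∫ v, v ∂μ := by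
          gcongr ?_ * ?_
          exact integral_mono_ae hexcess hmass (max_sub_zero_ae_le hR h₀)
      _ = (∫ v, φ v ∂μ) / 2 := by field_simp
  linarith

lemma IsUnbalancedGrowthKernel.le_coagulationRate (hK : IsUnbalancedGrowthKernel K γ A c Λ)
    (hm : 1 < m) (hN : 0 < N) (hL : 0 ≤ L) (hLN : L ≤ N / 2) (hΛR : Λ ≤ R) (hLR : Λ * L ≤ R)
    [SFinite μ] (h₀ : μ (Iic 0) = 0) (hi : Integrable (fun v ↦ 1 + v ^ γ) μ)
    (hmass : Integrable (fun v ↦ v) μ) (hpos : 0 < ∫ v, v ∂μ)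
    (hsmall : (∫ v, v ∂μ) / 2 ≤ ∫ v in Iic L, v ∂μ) (hint : Integrable (tailTest R N m) μ) :
    c / 4 * (∫ v, v ∂μ) * ((∫ v, tailTest R N m v ∂μ) *
        rateFactor γ m N ((∫ v, tailTest R N m v ∂μ) / (2 * ∫ v, v ∂μ))) ≤
      coagulationRate K μ (tailTest R N m) := by
  have hR : 0 ≤ R := by linarith [hK.one_le_Λ]
  have hF : 0 ≤ ∫ v, tailTest R N m v ∂μ := integral_nonneg (tailTest_nonneg hN.le)
  set v₀ := ∫ v, v ∂μ
  set F := ∫ v, tailTest R N m v ∂μ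
  have hlam : 0 ≤ F / (2 * v₀) := by positivity
  have hθ := rateFactor_nonneg (γ := γ) hm.le hN.le hlam
  have hexcess := integrable_max_sub_zero hR h₀ hmass
  have hlarge := integral_div_two_le_integral_sub_mul_max hR h₀ hmass hpos hint hF
  calc c / 4 * v₀ * (F * rateFactor γ m N (F / (2 * v₀)))
      = c * rateFactor γ m N (F / (2 * v₀)) * (F / 2 * (v₀ / 2)) := by ring
    _ ≤ c * rateFactor γ m N (F / (2 * v₀)) *
        ((∫ v, (tailTest R N m v - F / (2 * v₀) * max (v - R) 0) ∂μ) *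
          ∫ v, (Iic L).indicator id v ∂μ) := by
        have hc := hK.c_pos
        rw [integral_indicator measurableSet_Iic]
        gcongr
        exacts [(div_nonneg hF zero_le_two).trans hlarge, hsmall]
    _ ≤ coagulationRate K μ (tailTest R N m) := by
        rw [← integral_prod_mul, ← integral_const_mul]
        refine integral_mono_ae (((hint.sub (hexcess.const_mul _)).mul_prod
          (hmass.indicator measurableSet_Iic)).const_mul _)
          (hK.integrable_mul_mergerIncrement
            (isLinearUpToBounded_tailTest hm.le hR hN.le) h₀ hi) ?_
        filter_upwards [ae_prod_pos_of_measure_Iic_eq_zero h₀] with p hp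
        exact hK.le_mul_mergerIncrement hm hN hL hLN hΛR hLR hlam hp.1 hp.2

end Rate

/-! ### A lifespan bound for a differential inequality -/

section Lifespan

variable {F : ℝ → ℝ} {α κ a b m x y t T T' : ℝ}

lemma mul_rpow_mul_sub_le_rpow_neg_sub_rpow_neg (hα : 0 ≤ α) (hx : 0 < x) (hy : 0 < y) :
    α * y ^ (-(1 + α)) * (y - x) ≤ x ^ (-α) - y ^ (-α) := by
  have hratio : 1 - α * (x / y - 1) ≤ (x / y) ^ (-α) := by
    rw [Real.rpow_def_of_pos (div_pos hx hy)]
    have hlog : α * Real.log (x / y) ≤ α * (x / y - 1) :=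
      mul_le_mul_of_nonneg_left (Real.log_le_sub_one_of_pos (div_pos hx hy)) hα
    linarith [Real.add_one_le_exp (Real.log (x / y) * -α)]
  have hsplit : x ^ (-α) = y ^ (-α) * (x / y) ^ (-α) := by
    rw [← Real.mul_rpow hy.le (div_pos hx hy).le, mul_div_cancel₀ _ hy.ne']
  have hpow : y ^ (-(1 + α)) = y ^ (-α) / y := by
    rw [neg_add', ← Real.rpow_sub_one hy.ne', sub_eq_add_neg, sub_eq_add_neg, add_comm]
  calc α * y ^ (-(1 + α)) * (y - x) = y ^ (-α) * (1 - α * (x / y - 1)) - y ^ (-α) := by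
        rw [hpow]
        field_simp
        ring
    _ ≤ y ^ (-α) * (x / y) ^ (-α) - y ^ (-α) := by gcongr
    _ = x ^ (-α) - y ^ (-α) := by rw [hsplit]

lemma rpow_neg_le_sub_of_superlinear_growth (hα : 0 ≤ α) (hab : a ≤ b)
    (hF : ContinuousOn F (Icc a b)) (hpos : ∀ s ∈ Icc a b, 0 < F s)
    (hgrowth : ∀ s ∈ Icc a b, ∀ u ∈ Icc a b, s ≤ u →
      (u - s) * (κ * F s ^ (1 + α)) ≤ F u - F s) :
    F b ^ (-α) ≤ F a ^ (-α) - α * κ * (b - a) := by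
  refine image_le_of_liminf_slope_right_le_deriv_boundary (f := fun s ↦ F s ^ (-α))
    (B := fun s ↦ F a ^ (-α) - α * κ * (s - a)) (B' := fun _ ↦ -(α * κ))
    (hF.rpow_const fun s hs ↦ Or.inl (hpos s hs).ne') (by simp) (by fun_prop)
    (fun s _ ↦ ?_) (fun s hs r hr ↦ ?_) (right_mem_Icc.2 hab)
  · simpa using ((((hasDerivAt_id s).sub_const a).const_mul (α * κ)).const_sub
      (F a ^ (-α))).hasDerivWithinAt
  have hs' : s ∈ Icc a b := Ico_subset_Icc_self hs
  have hslope : ∀ᶠ z in nhdsWithin s (Ioi s),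
      slope (fun s ↦ F s ^ (-α)) s z ≤ -(α * κ * (F s ^ (1 + α) * F z ^ (-(1 + α)))) := by
    filter_upwards [Ioo_mem_nhdsGT hs.2] with z hz
    have hz' : z ∈ Icc a b := ⟨hs.1.trans hz.1.le, hz.2.le⟩
    have htangent := mul_rpow_mul_sub_le_rpow_neg_sub_rpow_neg hα (hpos s hs') (hpos z hz')
    have hcoef : 0 ≤ α * F z ^ (-(1 + α)) :=
      mul_nonneg hα (Real.rpow_nonneg (hpos z hz').le _)
    rw [slope_def_field, div_le_iff₀ (sub_pos.2 hz.1)]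
    linarith [mul_le_mul_of_nonneg_left (hgrowth s hs' z hz' hz.1.le) hcoef]
  have hlimit : Tendsto (fun z ↦ -(α * κ * (F s ^ (1 + α) * F z ^ (-(1 + α)))))
      (nhdsWithin s (Ioi s)) (nhds (-(α * κ))) := by
    have hFs : Tendsto F (nhdsWithin s (Ioi s)) (nhds (F s)) :=
      (hF s hs').mono_of_mem_nhdsWithin (mem_of_superset (Ioo_mem_nhdsGT hs.2)
        fun z hz ↦ ⟨hs.1.trans hz.1.le, hz.2.le⟩)
    have h := (((hFs.rpow_const (p := -(1 + α)) (Or.inl (hpos s hs').ne')).const_mul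
      (F s ^ (1 + α))).const_mul (α * κ)).neg
    rwa [← Real.rpow_add (hpos s hs'), add_neg_cancel, Real.rpow_zero, mul_one] at h
  exact ((hslope.and (hlimit.eventually_lt_const hr)).mono fun z hz ↦
    hz.1.trans_lt hz.2).frequently

-- Above the level `y` the growth rate is at least `κ * m * y ^ α`, so reaching it before `T` would
-- make `F T'` too large.
lemma le_of_growth_of_lt (hα : 0 ≤ α) (hκ : 0 < κ) (hm : 0 < m) (hy : 0 < y)
    (hgrowth : ∀ s ∈ Icc 0 T', ∀ u ∈ Icc 0 T', s ≤ u →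
      (u - s) * (κ * (F s * min (m * F s ^ α) (m * y ^ α))) ≤ F u - F s)
    (hfinal : F T' < (T' - T) * (κ * (y * (m * y ^ α)))) (ht : t ∈ Icc 0 T) (hT : T ≤ T') :
    F t ≤ y := by
  by_contra! hyt
  have ht' : t ∈ Icc 0 T' := ⟨ht.1, ht.2.trans hT⟩
  have h := hgrowth t ht' T' (right_mem_Icc.2 (ht'.1.trans ht'.2)) ht'.2
  rw [min_eq_right (by gcongr)] at h
  have : (T' - T) * (κ * (y * (m * y ^ α))) ≤ (T' - t) * (κ * (F t * (m * y ^ α))) := by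
    have : 0 ≤ T' - t := sub_nonneg.2 ht'.2
    have : 0 < m * y ^ α := by positivity
    gcongr
    exact ht.2
  linarith

lemma sub_le_rpow_neg_of_growth (hα : 0 < α) (hκ : 0 < κ) (hm : 0 < m) (hy : 0 < y)
    (hF : ContinuousOn F (Icc 0 T'))
    (hgrowth : ∀ s ∈ Icc 0 T', ∀ u ∈ Icc 0 T', s ≤ u →
      (u - s) * (κ * (F s * min (m * F s ^ α) (m * y ^ α))) ≤ F u - F s)
    (hfinal : F T' < (T' - T) * (κ * (y * (m * y ^ α))))
    (ht : t ∈ Icc 0 T) (hT : T < T') (hpos : 0 < F t) :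
    T - t ≤ F t ^ (-α) / (α * (κ * m)) := by
  have hsub : Icc t T ⊆ Icc 0 T' := Icc_subset_Icc ht.1 hT.le
  have hbelow : ∀ s ∈ Icc t T, F s ≤ y := fun s hs ↦
    le_of_growth_of_lt hα.le hκ hm hy hgrowth hfinal ⟨ht.1.trans hs.1, hs.2⟩ hT.le
  have hposOn : ∀ s ∈ Icc t T, 0 < F s := fun s hs ↦ by
    refine hpos.trans_le (sub_nonneg.1 (le_trans ?_
      (hgrowth t (hsub (left_mem_Icc.2 ht.2)) s (hsub hs) hs.1)))
    have := sub_nonneg.2 hs.1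
    positivity
  have hsuper : ∀ s ∈ Icc t T, ∀ u ∈ Icc t T, s ≤ u →
      (u - s) * (κ * m * F s ^ (1 + α)) ≤ F u - F s := fun s hs u hu hsu ↦ by
    have hFs := hposOn s hs
    have hmin : min (m * F s ^ α) (m * y ^ α) = m * F s ^ α :=
      min_eq_left (by gcongr; exact hbelow s hs)
    have h := hgrowth s (hsub hs) u (hsub hu) hsu
    rw [hmin] at h
    rwa [Real.rpow_one_add' hFs.le (by linarith), mul_assoc κ, mul_left_comm m]
  have hdecay := rpow_neg_le_sub_of_superlinear_growth hα.le ht.2 (hF.mono hsub) hposOn hsuper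
  rw [le_div_iff₀ (by positivity)]
  linarith [Real.rpow_nonneg (hposOn T (right_mem_Icc.2 ht.2)).le (-α)]

end Lifespan

/-! ### Growth of the truncated tail moments -/

section TailGrowth

variable {K : ℝ → ℝ → ℝ} {γ A c Λ T R N L m t : ℝ} {f : ℝ → Measure ℝ} {fin μ : Measure ℝ}

lemma rateFactor_mono {x y : ℝ} (hγ : 1 ≤ γ) (hm : 1 ≤ m) (hx : 0 ≤ x) (hxy : x ≤ y) :
    rateFactor γ m N x ≤ rateFactor γ m N y := by
  have : 0 ≤ (γ - 1) / (m - 1) := div_nonneg (by linarith) (by linarith)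
  unfold rateFactor
  gcongr

lemma IsUnbalancedGrowthKernel.coagulationRate_tailTest_nonneg
    (hK : IsUnbalancedGrowthKernel K γ A c Λ) (hm : 1 ≤ m) (hR : 0 ≤ R) (hN : 0 ≤ N)
    (h₀ : μ (Iic 0) = 0) : 0 ≤ coagulationRate K μ (tailTest R N m) := by
  refine integral_nonneg_of_ae ?_
  filter_upwards [ae_prod_pos_of_measure_Iic_eq_zero h₀] with p hp
  exact mul_nonneg (hK.kernel_nonneg _ _ hp.1 hp.2)
    (mergerIncrement_tailTest_nonneg hm hR hN hp.1.le hp.2.le)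

lemma IsWeakSolution.monotoneOn_integral_tailTest (hf : IsWeakSolution K γ T f fin)
    (hmc : IsMassConserving T f fin) (hK : IsUnbalancedGrowthKernel K γ A c Λ) (hm : 1 ≤ m)
    (hR : 0 ≤ R) (hN : 0 ≤ N) :
    MonotoneOn (fun t ↦ ∫ v, tailTest R N m v ∂f t) (Icc 0 T) := by
  intro a ha b hb hab
  rw [← sub_nonneg, hf.integral_sub_integral hmc hK.toIsPowerBoundedKernel
    (isLinearUpToBounded_tailTest hm hR hN) ha hb]
  refine mul_nonneg (by norm_num) (intervalIntegral.integral_nonneg hab fun s hs ↦ ?_)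
  have hs : s ∈ Icc 0 T := Icc_subset_Icc ha.1 hb.2 hs
  exact hK.coagulationRate_tailTest_nonneg hm hR hN (hf.conc s hs)

lemma IsWeakSolution.mul_rateFactor_le_integral_tailTest_sub (hf : IsWeakSolution K γ T f fin)
    (hmc : IsMassConserving T f fin) (hK : IsUnbalancedGrowthKernel K γ A c Λ)
    (hv₀ : 0 < ∫ v, v ∂fin)
    (hsmall : ∀ t ∈ Icc 0 T, (∫ v, v ∂fin) / 2 ≤ ∫ v in Iic L, v ∂f t)
    (hm : 1 < m) (hN : 0 < N) (hL : 0 ≤ L) (hLN : L ≤ N / 2) (hΛR : Λ ≤ R) (hLR : Λ * L ≤ R)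
    {a b : ℝ} (ha : a ∈ Icc 0 T) (hb : b ∈ Icc 0 T) (hab : a ≤ b) :
    (b - a) * (c / 8 * (∫ v, v ∂fin) * ((∫ v, tailTest R N m v ∂f a) *
        rateFactor γ m N ((∫ v, tailTest R N m v ∂f a) / (2 * ∫ v, v ∂fin)))) ≤
      (∫ v, tailTest R N m v ∂f b) - ∫ v, tailTest R N m v ∂f a := by
  have hR : 0 ≤ R := by linarith [hK.one_le_Λ]
  have hφ := isLinearUpToBounded_tailTest hm.le hR hN.le
  have hFa : 0 ≤ ∫ v, tailTest R N m v ∂f a := integral_nonneg (tailTest_nonneg hN.le)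
  obtain ⟨C, hC⟩ := hf.moment_bound
  set v₀ := ∫ v, v ∂fin
  set Fa := ∫ v, tailTest R N m v ∂f a
  have hrate : ∀ s ∈ Icc a b, c / 4 * v₀ * (Fa * rateFactor γ m N (Fa / (2 * v₀))) ≤
      coagulationRate K (f s) (tailTest R N m) := fun s hs ↦ by
    have hs' : s ∈ Icc 0 T := Icc_subset_Icc ha.1 hb.2 hs
    have := hf.isFiniteMeasure hs'
    have hmono : Fa ≤ ∫ v, tailTest R N m v ∂f s :=
      hf.monotoneOn_integral_tailTest hmc hK hm.le hR hN.le ha hs' hs.1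
    obtain ⟨hmass, hmass_eq⟩ := hmc.2 s hs'
    have h := hK.le_coagulationRate hm hN hL hLN hΛR hLR (hf.conc s hs') (hC s hs').1 hmass
      (hmass_eq ▸ hv₀) (hmass_eq ▸ hsmall s hs') (hf.integrable hmc hφ hs')
    rw [hmass_eq] at h
    refine le_trans ?_ h
    have := hK.c_pos
    have := rateFactor_nonneg (γ := γ) hm.le hN.le (by positivity : 0 ≤ Fa / (2 * v₀))
    gcongr ?_ * (?_ * ?_)
    exacts [hFa.trans hmono, rateFactor_mono hK.one_lt.le hm.le (by positivity) (by gcongr)]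
  have hint := intervalIntegral.integral_mono_on hab intervalIntegrable_const
    (hf.intervalIntegrable_coagulationRate hK.toIsPowerBoundedKernel hφ ha hb) hrate
  rw [intervalIntegral.integral_const, smul_eq_mul] at hint
  rw [hf.integral_sub_integral hmc hK.toIsPowerBoundedKernel hφ ha hb]
  linarith

lemma IsWeakSolution.integral_tailTest_le (hf : IsWeakSolution K γ T f fin)
    (hmc : IsMassConserving T f fin) (hm : 1 ≤ m) (hR : 0 ≤ R) (hN : 0 ≤ N)
    (ht : t ∈ Icc 0 T) : ∫ v, tailTest R N m v ∂f t ≤ N ^ (m - 1) * ∫ v, v ∂fin := by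
  obtain ⟨hmass, hmass_eq⟩ := hmc.2 t ht
  rw [← hmass_eq, ← integral_const_mul]
  exact integral_mono_ae (hf.integrable hmc (isLinearUpToBounded_tailTest hm hR hN) ht)
    (hmass.const_mul _) <| (ae_pos_of_measure_Iic_eq_zero (hf.conc t ht)).mono fun v hv ↦
      tailTest_le_mul hm hR hN hv.le

lemma IsWeakSolution.exists_forall_div_two_le_setIntegral_Iic (hf : IsWeakSolution K γ T f fin)
    (hmc : IsMassConserving T f fin) (hγ : 1 < γ) (hv₀ : 0 < ∫ v, v ∂fin) :
    ∃ L, 0 < L ∧ ∀ t ∈ Icc 0 T, (∫ v, v ∂fin) / 2 ≤ ∫ v in Iic L, v ∂f t := by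
  obtain ⟨C, hC⟩ := hf.moment_bound
  have hlim : Tendsto (fun L : ℝ ↦ L ^ (1 - γ) * C) atTop (nhds 0) := by
    simpa using (tendsto_rpow_neg_atTop (sub_pos.2 hγ)).mul_const C
  obtain ⟨L, hLC, hL⟩ :=
    ((hlim.eventually_lt_const (half_pos hv₀)).and (eventually_gt_atTop 0)).exists
  refine ⟨L, hL, fun t ht ↦ ?_⟩
  obtain ⟨hmass, hmass_eq⟩ := hmc.2 t ht
  have h := integral_sub_le_setIntegral_Iic (hf.conc t ht) (hC t ht).1 hmass hγ.le hL
  have := mul_le_mul_of_nonneg_left (hC t ht).2 (Real.rpow_nonneg hL.le (1 - γ))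
  linarith

end TailGrowth

/-! ### Removing the truncation -/

section Limit

variable {K : ℝ → ℝ → ℝ} {γ A c Λ T T' R N L m t : ℝ} {f : ℝ → Measure ℝ} {fin μ : Measure ℝ}

lemma truncatedPow_le_rpow {w : ℝ} (hm : 1 ≤ m) (hN : 0 ≤ N) (hw : 0 ≤ w) :
    truncatedPow N m w ≤ w ^ m := by
  rw [← truncatedPow_eq_rpow hm hw le_rfl, truncatedPow, truncatedPow, min_self]
  gcongr
  exact min_le_left _ _

lemma tendsto_integral_tailTest (hm : 1 ≤ m)
    (hint : IntegrableOn (fun v ↦ (v - R) ^ m) (Ici R) μ) :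
    Tendsto (fun N ↦ ∫ v, tailTest R N m v ∂μ) atTop (nhds (∫ v in Ici R, (v - R) ^ m ∂μ)) := by
  rw [← integral_indicator measurableSet_Ici]
  refine tendsto_integral_filter_of_dominated_convergence _
    (.of_forall fun N ↦ (continuous_tailTest hm).aestronglyMeasurable) ?_
    (hint.integrable_indicator measurableSet_Ici) (ae_of_all _ fun v ↦ ?_)
  · filter_upwards [eventually_ge_atTop 0] with N hN
    refine ae_of_all _ fun v ↦ ?_
    rw [Real.norm_of_nonneg (tailTest_nonneg hN v)]
    rcases lt_or_ge v R with hv | hv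
    · rw [tailTest_of_le hv.le, indicator_of_notMem (notMem_Ici.2 hv)]
    · rw [tailTest_of_ge hv, indicator_of_mem (mem_Ici.2 hv)]
      exact truncatedPow_le_rpow hm hN (sub_nonneg.2 hv)
  · refine tendsto_const_nhds.congr' ?_
    filter_upwards [eventually_ge_atTop (v - R)] with N hN
    rcases lt_or_ge v R with hv | hv
    · rw [tailTest_of_le hv.le, indicator_of_notMem (notMem_Ici.2 hv)]
    · rw [tailTest_of_ge hv, indicator_of_mem (mem_Ici.2 hv),
        truncatedPow_eq_rpow hm (sub_nonneg.2 hv) hN]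

lemma eventually_exists_saturation_level (hγ : 1 < γ) (hm : 1 < m) {δ : ℝ} (hδ : 0 < δ) :
    ∀ᶠ N in atTop, ∃ y, 0 < y ∧ m * y ^ ((γ - 1) / (m - 1)) = (N / 2) ^ (γ - 1) ∧
      N ^ (m - 1) / 2 < δ * (y * (N / 2) ^ (γ - 1)) := by
  have hγ₁ : 0 < γ - 1 := by linarith
  have hm₁ : 0 < m - 1 := by linarith
  set D := m ^ (-((m - 1) / (γ - 1))) * (1 / 2) ^ (m - 1)
  have : 0 < D := by positivity
  have hlim : Tendsto (fun N : ℝ ↦ δ * D * (N / 2) ^ (γ - 1)) atTop atTop :=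
    ((tendsto_rpow_atTop hγ₁).comp (tendsto_id.atTop_div_const two_pos)).const_mul_atTop
      (by positivity)
  filter_upwards [hlim.eventually_gt_atTop (1 / 2), eventually_gt_atTop 0] with N hlarge hN
  refine ⟨D * N ^ (m - 1), by positivity, ?_, ?_⟩
  · have hy : D * N ^ (m - 1) = m ^ (-((m - 1) / (γ - 1))) * (N / 2) ^ (m - 1) := by
      rw [mul_assoc, ← Real.mul_rpow (by norm_num) hN.le, one_div_mul_eq_div]
    rw [hy, Real.mul_rpow (by positivity) (by positivity), ← Real.rpow_mul (by positivity),
      ← Real.rpow_mul (by positivity), mul_div_cancel₀ _ hm₁.ne', neg_mul,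
      div_mul_div_cancel₀ hγ₁.ne', div_self hm₁.ne', Real.rpow_neg_one,
      mul_inv_cancel_left₀ (by positivity)]
  · have := mul_lt_mul_of_pos_left hlarge (by positivity : 0 < N ^ (m - 1))
    linarith

lemma IsWeakSolution.eventually_sub_le_rpow_neg_integral_tailTest
    (hf : IsWeakSolution K γ T' f fin) (hmc : IsMassConserving T' f fin)
    (hK : IsUnbalancedGrowthKernel K γ A c Λ) (hv₀ : 0 < ∫ v, v ∂fin)
    (hsmall : ∀ t ∈ Icc 0 T', (∫ v, v ∂fin) / 2 ≤ ∫ v in Iic L, v ∂f t) (hm : 1 < m)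
    (hL : 0 ≤ L) (hΛR : Λ ≤ R) (hLR : Λ * L ≤ R) (ht : t ∈ Icc 0 T) (hT : T < T') :
    ∀ᶠ N in atTop, 0 < ∫ v, tailTest R N m v ∂f t →
      T - t ≤ ((∫ v, tailTest R N m v ∂f t) / (2 * ∫ v, v ∂fin)) ^ (-((γ - 1) / (m - 1))) /
        ((γ - 1) / (m - 1) * (c / 8 * (∫ v, v ∂fin) * m)) := by
  have hR : 0 ≤ R := by linarith [hK.one_le_Λ]
  have hc := hK.c_pos
  have hα : 0 < (γ - 1) / (m - 1) := div_pos (by linarith [hK.one_lt]) (by linarith)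
  filter_upwards [eventually_gt_atTop 0, eventually_ge_atTop (2 * L),
    eventually_exists_saturation_level hK.one_lt hm
      (by have := sub_pos.2 hT; positivity : 0 < (T' - T) * (c / 8 * ∫ v, v ∂fin))]
    with N hN hLN ⟨y, hy, hsat, hlevel⟩ hpos
  refine sub_le_rpow_neg_of_growth
    (F := fun s ↦ (∫ v, tailTest R N m v ∂f s) / (2 * ∫ v, v ∂fin))
    hα (by positivity) (by linarith) hy
    ((hf.continuousOn_integral hmc hK.toIsPowerBoundedKernel
      (isLinearUpToBounded_tailTest hm.le hR hN.le)).div_const _)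
    (fun s hs u hu hsu ↦ ?_) ?_ ht hT (by positivity)
  · have h := hf.mul_rateFactor_le_integral_tailTest_sub hmc hK hv₀ hsmall hm hN hL
      (by linarith) hΛR hLR hs hu hsu
    rw [hsat, ← sub_div, le_div_iff₀ (by positivity)]
    refine le_of_eq_of_le ?_ h
    rw [rateFactor]
    field_simp
  · have hT' : T' ∈ Icc 0 T' := right_mem_Icc.2 (ht.1.trans (ht.2.trans hT.le))
    have hbound := hf.integral_tailTest_le (R := R) hmc hm.le hR hN.le hT'
    rw [hsat]
    calc (∫ v, tailTest R N m v ∂f T') / (2 * ∫ v, v ∂fin) ≤ N ^ (m - 1) / 2 := by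
          rw [div_le_div_iff₀ (by positivity) two_pos]
          linarith
      _ < _ := hlevel
      _ = _ := by ring

lemma IsWeakSolution.sub_le_rpow_neg_tailMoment
    (hf : IsWeakSolution K γ T' f fin) (hmc : IsMassConserving T' f fin)
    (hK : IsUnbalancedGrowthKernel K γ A c Λ) (hv₀ : 0 < ∫ v, v ∂fin)
    (hsmall : ∀ t ∈ Icc 0 T', (∫ v, v ∂fin) / 2 ≤ ∫ v in Iic L, v ∂f t) (hm : 1 < m)
    (hL : 0 ≤ L) (hΛR : Λ ≤ R) (hLR : Λ * L ≤ R) (ht : t ∈ Icc 0 T) (hT : T < T')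
    (hM : 0 < ∫ v in Ici R, (v - R) ^ m ∂f t) :
    T - t ≤ ((∫ v in Ici R, (v - R) ^ m ∂f t) / (2 * ∫ v, v ∂fin)) ^
        (-((γ - 1) / (m - 1))) / ((γ - 1) / (m - 1) * (c / 8 * (∫ v, v ∂fin) * m)) := by
  have hlim := tendsto_integral_tailTest hm.le (Integrable.of_integral_ne_zero hM.ne')
  refine ge_of_tendsto (((hlim.div_const _).rpow_const (Or.inl (by positivity))).div_const _) ?_
  filter_upwards [hlim.eventually_const_lt hM,
    hf.eventually_sub_le_rpow_neg_integral_tailTest hmc hK hv₀ hsmall hm hL hΛR hLR ht hT]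
    with N hpos hN using hN hpos

end Limit

/-! ### Kernels vanishing on the diagonal -/

section Kernel

variable {K h : ℝ → ℝ → ℝ} {g : ℝ → ℝ} {γ H H₀ H₁ G₀ G₁ k v v' : ℝ}

lemma div_add_mem_Icc (hv : 0 < v) (hv' : 0 < v') : v / (v + v') ∈ Icc (0 : ℝ) 1 :=
  ⟨by positivity, div_le_one_of_le₀ (by linarith) (by linarith)⟩

lemma KernelAssumptionA.continuousOn (hK : KernelAssumptionA K h g γ H H₀ H₁ G₀ G₁ k) :
    ContinuousOn (Function.uncurry K) (Ioi 0 ×ˢ Ioi 0) := by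
  have hratio : ContinuousOn (fun p : ℝ × ℝ ↦ p.1 / (p.1 + p.2)) (Ioi 0 ×ˢ Ioi 0) :=
    continuousOn_fst.div (by fun_prop) fun p hp ↦ (add_pos hp.1 hp.2).ne'
  refine ((hK.h_cont.mono (prod_mono Ioi_subset_Ici_self Ioi_subset_Ici_self)).mul
    (hK.g_cont.comp hratio fun p hp ↦ div_add_mem_Icc hp.1 hp.2)).congr fun p hp ↦ ?_
  exact hK.K_eq _ _ hp.1.le hp.2.le (add_pos hp.1 hp.2)

lemma KernelAssumptionA.abs_le (hK : KernelAssumptionA K h g γ H H₀ H₁ G₀ G₁ k) (hv : 0 < v)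
    (hv' : 0 < v') : |K v v'| ≤ H₁ * G₁ * (v ^ γ + v' ^ γ) := by
  have hx := div_add_mem_Icc hv hv'
  have hH₁ := hK.H₁_pos
  have hg : 0 ≤ g (v / (v + v')) :=
    (mul_nonneg hK.G₀_pos.le (Real.rpow_nonneg (abs_nonneg _) k)).trans (hK.g_lower _ hx)
  rw [abs_of_nonneg (hK.K_nonneg _ _ hv.le hv'.le), hK.K_eq _ _ hv.le hv'.le (add_pos hv hv')]
  calc h v v' * g (v / (v + v')) ≤ H₁ * (v ^ γ + v' ^ γ) * G₁ := by
        gcongr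
        exacts [hK.h_upper _ _ hv.le hv'.le, hK.g_upper _ hx]
    _ = H₁ * G₁ * (v ^ γ + v' ^ γ) := by ring

lemma KernelAssumptionA.mul_rpow_le (hK : KernelAssumptionA K h g γ H H₀ H₁ G₀ G₁ k)
    (hv' : 0 < v') (hH : H ≤ v) (hvv' : 3 * v' ≤ v) :
    H₀ * (G₀ * (1 / 4) ^ k) * v ^ γ ≤ K v v' := by
  have hv : 0 < v := by linarith
  have hH₀ := hK.H₀_pos
  have hG₀ := hK.G₀_pos
  have hoff : 1 / 4 ≤ |v / (v + v') - 1 / 2| := by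
    have : 3 / 4 ≤ v / (v + v') := (le_div_iff₀ (by linarith)).2 (by linarith)
    exact le_abs.2 (Or.inl (by linarith))
  have hg : G₀ * (1 / 4) ^ k ≤ g (v / (v + v')) :=
    (by gcongr; linarith [hK.k_ge_one] : _ ≤ G₀ * |v / (v + v') - 1 / 2| ^ k).trans
      (hK.g_lower _ (div_add_mem_Icc hv hv'))
  have hh : H₀ * v ^ γ ≤ h v v' :=
    (by gcongr; linarith [Real.rpow_nonneg hv'.le γ] : _ ≤ H₀ * (v ^ γ + v' ^ γ)).trans
      (hK.h_lower _ _ hv.le hv'.le (by linarith))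
  rw [hK.K_eq _ _ hv.le hv'.le (by linarith)]
  calc H₀ * (G₀ * (1 / 4) ^ k) * v ^ γ = H₀ * v ^ γ * (G₀ * (1 / 4) ^ k) := by ring
    _ ≤ h v v' * g (v / (v + v')) := by
        gcongr
        exact (by positivity : 0 ≤ H₀ * v ^ γ).trans hh

lemma KernelAssumptionA.isUnbalancedGrowthKernel
    (hK : KernelAssumptionA K h g γ H H₀ H₁ G₀ G₁ k) :
    IsUnbalancedGrowthKernel K γ (H₁ * G₁) (H₀ * (G₀ * (1 / 4) ^ k)) (max 3 H) where
  measurable_indicator := by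
    rw [← piecewise_eq_indicator]
    exact hK.continuousOn.measurable_piecewise continuousOn_const
      (measurableSet_Ioi.prod measurableSet_Ioi)
  abs_le _ _ hv hv' := hK.abs_le hv hv'
  one_lt := hK.γ_gt_one
  kernel_nonneg _ _ hv hv' := hK.K_nonneg _ _ hv.le hv'.le
  c_pos := by
    have hH₀ := hK.H₀_pos
    have hG₀ := hK.G₀_pos
    positivity
  one_le_Λ := le_max_of_le_left (by norm_num)
  mul_rpow_le _ _ hv' hv hvv' :=
    hK.mul_rpow_le hv' ((le_max_right _ _).trans hv)
      ((mul_le_mul_of_nonneg_right (le_max_left _ _) hv'.le).trans hvv')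

end Kernel

/-! ### The bound on the remaining time -/

lemma rpow_neg_div_le {γ m M V κ : ℝ} (hγ : 1 < γ) (hm : 2 ≤ m) (hM : 0 ≤ M) (hV : 0 < V)
    (hκ : 0 < κ) :
    (M / V) ^ (-((γ - 1) / (m - 1))) / ((γ - 1) / (m - 1) * (κ * m)) ≤
      max 1 V ^ (γ - 1) / ((γ - 1) * κ) * M ^ (-((γ - 1) / (m - 1))) := by
  have hγ₁ : 0 < γ - 1 := by linarith
  have hm₁ : 0 < m - 1 := by linarith
  have hexp : (γ - 1) / (m - 1) ≤ γ - 1 := div_le_self hγ₁.le (by linarith)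
  have hcoef : γ - 1 ≤ (γ - 1) / (m - 1) * m := by
    rw [div_mul_eq_mul_div, le_div_iff₀ hm₁]
    gcongr
    linarith
  have hV' : V ^ ((γ - 1) / (m - 1)) ≤ max 1 V ^ (γ - 1) :=
    (Real.rpow_le_rpow hV.le (le_max_right _ _) (by positivity)).trans
      (Real.rpow_le_rpow_of_exponent_le (le_max_left _ _) hexp)
  calc (M / V) ^ (-((γ - 1) / (m - 1))) / ((γ - 1) / (m - 1) * (κ * m))
      = V ^ ((γ - 1) / (m - 1)) / ((γ - 1) / (m - 1) * m * κ) *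
          M ^ (-((γ - 1) / (m - 1))) := by
        rw [Real.div_rpow hM hV.le, Real.rpow_neg hV.le, div_inv_eq_mul]
        ring
    _ ≤ max 1 V ^ (γ - 1) / ((γ - 1) * κ) * M ^ (-((γ - 1) / (m - 1))) := by gcongr

theorem remaining_time_bound_general {K : ℝ → ℝ → ℝ} {γ A c Λ T T'' : ℝ} {fin : Measure ℝ}
    {f : ℝ → Measure ℝ} (hK : IsUnbalancedGrowthKernel K γ A c Λ) (hv₀ : 0 < ∫ v, v ∂fin)
    (hf : IsWeakSolution K γ T'' f fin) (hmc : IsMassConserving T'' f fin) (hT : T < T'') :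
    ∃ R₀ : ℝ, 0 < R₀ ∧ ∃ C : ℝ, 0 < C ∧
      ∀ t ∈ Icc (0 : ℝ) T, ∀ m : ℝ, 2 ≤ m → ∀ R : ℝ, R₀ ≤ R →
        0 < (∫ v in Ici R, (v - R) ^ m ∂(f t)) →
        T ≤ t + C * (∫ v in Ici R, (v - R) ^ m ∂(f t)) ^ (-((γ - 1) / (m - 1))) := by
  obtain ⟨L, hL, hsmall⟩ := hf.exists_forall_div_two_le_setIntegral_Iic hmc hK.one_lt hv₀
  have hΛ : 0 < Λ := by linarith [hK.one_le_Λ]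
  have hγ := sub_pos.2 hK.one_lt
  have hκ : 0 < c / 8 * ∫ v, v ∂fin := mul_pos (div_pos hK.c_pos (by norm_num)) hv₀
  refine ⟨Λ * max 1 L, by positivity,
    max 1 (2 * ∫ v, v ∂fin) ^ (γ - 1) / ((γ - 1) * (c / 8 * ∫ v, v ∂fin)),
    by positivity, fun t ht m hm R hR hM ↦ ?_⟩
  have hΛR : Λ ≤ R := (le_mul_of_one_le_right hΛ.le (le_max_left _ _)).trans hR
  have hLR : Λ * L ≤ R := (mul_le_mul_of_nonneg_left (le_max_right _ _) hΛ.le).trans hR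
  rw [← sub_le_iff_le_add']
  exact (hf.sub_le_rpow_neg_tailMoment hmc hK hv₀ hsmall (by linarith) hL.le hΛR hLR ht hT hM).trans
    (rpow_neg_div_le hK.one_lt hm hM.le (by positivity) hκ)

/-- Quantitative bound on the remaining time: there are `R₀ > 0`
and `C > 0` (independent of `m` and `R`) such that, whenever the tail moment
`M = ∫_{[R,∞)} (v-R)^m f(dv,t)` is positive, `T ≤ t + C · M^{-(γ-1)/(m-1)}`. -/
theorem remaining_time_bound
    (K h : ℝ → ℝ → ℝ) (g : ℝ → ℝ) (γ H H₀ H₁ G₀ G₁ k : ℝ)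
    (hK : KernelAssumptionA K h g γ H H₀ H₁ G₀ G₁ k)
    (T'' : ℝ) (hT'' : 0 < T'')
    (fin : Measure ℝ) (hconc : fin (Iic 0) = 0)
    (hγmom : Integrable (fun v => 1 + v ^ γ) fin)
    (hv₀ : 0 < ∫ v, v ∂fin)
    (f : ℝ → Measure ℝ) (hf : IsWeakSolution K γ T'' f fin)
    (hmc : IsMassConserving T'' f fin)
    (T : ℝ) (hT : T ∈ Ioo (0 : ℝ) T'') :
    ∃ R₀ : ℝ, 0 < R₀ ∧ ∃ C : ℝ, 0 < C ∧
      ∀ t ∈ Icc (0 : ℝ) T, ∀ m : ℝ, 2 < m → ∀ R : ℝ, R₀ ≤ R →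
        0 < (∫ v in Ici R, (v - R) ^ m ∂(f t)) →
        T ≤ t + C * (∫ v in Ici R, (v - R) ^ m ∂(f t)) ^ (-((γ - 1) / (m - 1))) := by
  obtain ⟨R₀, hR₀, C, hC, h⟩ :=
    remaining_time_bound_general hK.isUnbalancedGrowthKernel hv₀ hf hmc hT.2
  exact ⟨R₀, hR₀, C, hC, fun t ht m hm ↦ h t ht m hm.le⟩
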